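/- arXiv:2506.12614 — 2 statements merged into one kernel-verified Lean document; each statement's English description precedes it below -/
import Mathlib

section
/- Let 0 < ρ < 1 and let f ∈ L¹([0,1]) have the 2nd level fractional derivative of order ρ and type (ν₁,ν₂) = (0,1) (i.e. J^{1−ρ} f ∈ AC([0,1]) and J^{1}(d/dt)J^{1−ρ} f ∈ AC([0,1])). Then the 2nd level fractional derivative coincides with the Riemann–Liouville fractional derivative: (2LD^{ρ,(0,1)} f)(t) = (RLD^ρ f)(t). -/
open MeasureTheory Set Real Filter

/-- Riemann-Liouville fractional integral of order `ρ` on `[0,1]` (with `J⁰` the identity). -/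
noncomputable def J (ρ : ℝ) (f : ℝ → ℝ) : ℝ → ℝ :=
  if ρ = 0 then f else
    fun t => (1 / Real.Gamma ρ) * ∫ τ in (0:ℝ)..t, (t - τ) ^ (ρ - 1) * f τ

/-- Riemann-Liouville fractional derivative of order `ρ`. -/
noncomputable def RLD (ρ : ℝ) (f : ℝ → ℝ) : ℝ → ℝ :=
  fun t => deriv (J (1 - ρ) f) t

/-- `f ∈ L¹([0,1])`. -/
def MemL1 (f : ℝ → ℝ) : Prop := MeasureTheory.IntegrableOn f (Set.Icc 0 1)

/-- `f` is absolutely continuous on `[0,1]`: it is an integral of an `L¹` function. -/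
def AC01 (f : ℝ → ℝ) : Prop :=
  ∃ g : ℝ → ℝ, MeasureTheory.IntegrableOn g (Set.Icc 0 1) ∧
    ∀ t ∈ Set.Icc (0:ℝ) 1, f t = f 0 + ∫ τ in (0:ℝ)..t, g τ

/-- The 2nd level fractional derivative of order `ρ` and type `(ν₁, ν₂)`. -/
noncomputable def LFD2 (ρ ν₁ ν₂ : ℝ) (f : ℝ → ℝ) : ℝ → ℝ :=
  J ν₁ (deriv (J ν₂ (deriv (J (2 - ρ - ν₁ - ν₂) f))))

theorem AC01_deriv_aux {F : ℝ → ℝ} {g : ℝ → ℝ} (c : ℝ) (hg : IntegrableOn g (Set.Icc 0 1))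
    (h : ∀ t ∈ Set.Icc (0:ℝ) 1, F t = c + ∫ τ in (0:ℝ)..t, g τ) :
    ∀ᵐ t ∂(volume.restrict (Set.Icc (0:ℝ) 1)), deriv F t = g t := by
  have hi : IntervalIntegrable g volume 0 1 := by
    rw [intervalIntegrable_iff_integrableOn_Icc_of_le zero_le_one]
    exact hg
  have h0 : ∀ᵐ x : ℝ, x ≠ 0 := by simp [ae_iff, measure_singleton]
  have h1 : ∀ᵐ x : ℝ, x ≠ 1 := by simp [ae_iff, measure_singleton]
  rw [ae_restrict_iff' measurableSet_Icc]
  filter_upwards [hi.ae_hasDerivAt_integral, h0, h1] with x hx hx0 hx1 hxm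
  rw [uIcc_of_le zero_le_one] at hx
  have hd := (hx hxm 0 (by simp)).const_add c
  have hev : F =ᶠ[nhds x] fun t => c + ∫ τ in (0:ℝ)..t, g τ := by
    filter_upwards [Icc_mem_nhds (lt_of_le_of_ne hxm.1 hx0.symm) (lt_of_le_of_ne hxm.2 hx1)]
      with t ht using h t ht
  exact (hd.congr_of_eventuallyEq hev).deriv

/-- For type `(ν₁,ν₂) = (0,1)`, the 2nd level derivative is the RL derivative. -/
theorem stmt_9 (ρ : ℝ) (hρ0 : 0 < ρ) (hρ1 : ρ < 1) (f : ℝ → ℝ) (hf : MemL1 f)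
    (hAC1 : AC01 (J (1 - ρ) f)) (hAC2 : AC01 (J 1 (deriv (J (1 - ρ) f)))) :
    ∀ᵐ t ∂(volume.restrict (Set.Icc (0:ℝ) 1)), LFD2 ρ 0 1 f t = RLD ρ f t := by
  obtain ⟨g, hg, hgF⟩ := hAC1
  have hd := AC01_deriv_aux _ hg hgF
  have hint : IntegrableOn (deriv (J (1 - ρ) f)) (Set.Icc 0 1) :=
    Integrable.congr hg (hd.mono fun t ht => ht.symm)
  have hd2 := AC01_deriv_aux (F := J 1 (deriv (J (1 - ρ) f))) 0 hint (by
    intro t _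
    simp [J])
  have he : LFD2 ρ 0 1 f = deriv (J 1 (deriv (J (1 - ρ) f))) := by
    have : 2 - ρ - 0 - 1 = 1 - ρ := by ring
    unfold LFD2
    rw [this]
    generalize J 1 (deriv (J (1 - ρ) f)) = G
    simp [J]
  rw [he]
  exact hd2
end

section
/- Let 0 < ρ < 1 and let f ∈ AC([0,1]) have the 2nd level fractional derivative of order ρ and type (ν₁,ν₂) = (1−ρ, 0). Then the 2nd level fractional derivative coincides with the Caputo fractional derivative: (2LD^{ρ,(1−ρ,0)} f)(t) = RLD^ρ( f(·) − f(0) )(t) = (CD^ρ f)(t). -/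
open MeasureTheory Set Real Filter

/-- The Caputo fractional derivative of order `ρ`. -/
noncomputable def CD (ρ : ℝ) (f : ℝ → ℝ) : ℝ → ℝ := J (1 - ρ) (deriv f)

lemma aux_conv (a : ℝ) (g G : ℝ → ℝ) (h0 : ∀ x ≤ 0, G x = 0) (h1 : ∀ x ∈ Ioc (0:ℝ) 1, G x = g x)
    (s : ℝ) (hs : s ∈ Icc (0:ℝ) 1) :
    ∫ τ in (0:ℝ)..s, (s - τ) ^ (a - 1) * g τ =
      ∫ u, (Ioc (0:ℝ) 1).indicator (fun u => u ^ (a - 1)) u * G (s - u) := by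
  have e1 : ∫ τ in (0:ℝ)..s, (s - τ) ^ (a - 1) * g τ
      = ∫ u in (0:ℝ)..s, u ^ (a - 1) * g (s - u) := by
    have := intervalIntegral.integral_comp_sub_left (a := 0) (b := s)
      (fun u => u ^ (a - 1) * g (s - u)) s
    simpa using this
  rw [e1, intervalIntegral.integral_of_le hs.1, ← integral_indicator measurableSet_Ioc]
  apply integral_congr_ae
  have hne : ∀ᵐ u : ℝ, u ≠ s := by simp [ae_iff, measure_singleton]
  filter_upwards [hne] with u hu
  obtain ⟨hs0, hs1⟩ := hs
  by_cases hu1 : u ∈ Ioc 0 s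
  · have hlt : u < s := lt_of_le_of_ne hu1.2 hu
    have : u ∈ Ioc (0:ℝ) 1 := ⟨hu1.1, hu1.2.trans hs1⟩
    rw [indicator_of_mem hu1, indicator_of_mem this, h1]
    exact ⟨by linarith, by linarith [hu1.1]⟩
  · rw [indicator_of_notMem hu1]
    by_cases hu0 : 0 < u
    · have : s < u := by
        by_contra h
        exact hu1 ⟨hu0, not_lt.1 h⟩
      rw [h0 _ (by linarith), mul_zero]
    · rw [indicator_of_notMem (fun h => hu0 h.1), zero_mul]

lemma aux_K (a : ℝ) (ha : 0 < a) :
    Integrable ((Ioc (0:ℝ) 1).indicator (fun u : ℝ => u ^ (a - 1))) := by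
  rw [integrable_indicator_iff measurableSet_Ioc]
  exact (intervalIntegral.intervalIntegrable_rpow' (a := 0) (b := 1) (by linarith : -1 < a - 1)).1

/-- primitive of G -/
lemma aux_P0 (G : ℝ → ℝ) (h0 : ∀ x ≤ 0, G x = 0) (x : ℝ) (hx : x ≤ 0) :
    ∫ v in (0:ℝ)..x, G v = 0 := by
  apply intervalIntegral.integral_zero_ae
  filter_upwards with v hv
  rw [uIoc_of_ge hx] at hv
  exact h0 v hv.2

lemma aux_fubini (K G : ℝ → ℝ) (hK : Integrable K) (hG : Integrable G)
    (hK0 : ∀ u ≤ 0, K u = 0)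
    (h0 : ∀ x ≤ 0, G x = 0) (t : ℝ) :
    ∫ s in (0:ℝ)..t, (∫ u, K u * G (s - u)) = ∫ u, K u * ∫ v in (0:ℝ)..(t - u), G v := by
  have hint : Integrable (fun p : ℝ × ℝ => K p.2 * G (p.1 - p.2)) (volume.prod volume) :=
    hK.convolution_integrand (ContinuousLinearMap.mul ℝ ℝ) hG
  have hint2 : Integrable (Function.uncurry fun (s u : ℝ) => K u * G (s - u))
      ((volume.restrict (uIoc 0 t)).prod volume) := by
    have := hint.mono_measure (μ := (volume.restrict (uIoc 0 t)).prod volume)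
      (Measure.prod_mono Measure.restrict_le_self le_rfl)
    exact this
  rw [MeasureTheory.intervalIntegral_integral_swap hint2]
  apply integral_congr_ae
  filter_upwards with u
  rw [intervalIntegral.integral_const_mul, intervalIntegral.integral_comp_sub_right]
  by_cases hu : u ≤ 0
  · simp [hK0 u hu]
  · congr 1
    rw [← intervalIntegral.integral_add_adjacent_intervals (b := 0) hG.intervalIntegrable
      hG.intervalIntegrable, intervalIntegral.integral_symm, aux_P0 G h0 _ (by linarith)]
    simp

lemma aux_main (a : ℝ) (ha : 0 < a) (f g : ℝ → ℝ) (hg : IntegrableOn g (Icc 0 1))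
    (hfg : ∀ t ∈ Icc (0:ℝ) 1, f t = f 0 + ∫ τ in (0:ℝ)..t, g τ) :
    ∀ᵐ t, t ∈ Ioo (0:ℝ) 1 → deriv (J a (fun s => f s - f 0)) t = J a g t := by
  set K := (Ioc (0:ℝ) 1).indicator (fun u : ℝ => u ^ (a - 1)) with hKdef
  set G := (Ioc (0:ℝ) 1).indicator g with hGdef
  have hK : Integrable K := aux_K a ha
  have hG : Integrable G := by
    rw [integrable_indicator_iff measurableSet_Ioc]
    exact hg.mono_set Ioc_subset_Icc_self
  have hK0 : ∀ u ≤ 0, K u = 0 := fun u hu => indicator_of_notMem (fun h => not_lt.2 hu h.1) _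
  have hG0 : ∀ u ≤ 0, G u = 0 := fun u hu => indicator_of_notMem (fun h => not_lt.2 hu h.1) _
  have hG1 : ∀ u ∈ Ioc (0:ℝ) 1, G u = g u := fun u hu => indicator_of_mem hu _
  have hP1 : ∀ x ∈ Ioc (0:ℝ) 1, ∫ v in (0:ℝ)..x, G v = f x - f 0 := by
    intro x hx
    rw [hfg x ⟨hx.1.le, hx.2⟩, add_sub_cancel_left]
    apply intervalIntegral.integral_congr_ae
    filter_upwards with v hv
    rw [uIoc_of_le hx.1.le] at hv
    exact hG1 v ⟨hv.1, hv.2.trans hx.2⟩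
  have hconv : Integrable (fun s => ∫ u, K u * G (s - u)) :=
    hK.integrable_convolution (ContinuousLinearMap.mul ℝ ℝ) hG
  filter_upwards [_root_.LocallyIntegrable.ae_hasDerivAt_integral hconv.locallyIntegrable] with t ht htI
  have hd := (ht 0).const_mul (1 / Real.Gamma a)
  have hJ : ∀ (h : ℝ → ℝ) (t : ℝ),
      J a h t = (1 / Real.Gamma a) * ∫ τ in (0:ℝ)..t, (t - τ) ^ (a - 1) * h τ := by
    intro h t
    simp [J, ha.ne']
  rw [hJ, aux_conv a g G hG0 hG1 t ⟨htI.1.le, htI.2.le⟩, ← hd.deriv]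
  apply Filter.EventuallyEq.deriv_eq
  filter_upwards [Ioo_mem_nhds htI.1 htI.2] with s hs
  rw [hJ, aux_conv a _ (fun x => ∫ v in (0:ℝ)..x, G v) (aux_P0 G hG0) hP1 s ⟨hs.1.le, hs.2.le⟩,
    aux_fubini K G hK hG hK0 hG0]

lemma aux_J_congr (a : ℝ) (ha : 0 < a) (g h : ℝ → ℝ)
    (hgh : ∀ᵐ t, t ∈ Ioo (0:ℝ) 1 → g t = h t) (t : ℝ) (ht : t ∈ Ioo (0:ℝ) 1) :
    J a g t = J a h t := by
  simp only [J, ha.ne', if_false]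
  congr 1
  apply intervalIntegral.integral_congr_ae
  filter_upwards [hgh] with v hv hvt
  rw [uIoc_of_le ht.1.le] at hvt
  rw [hv ⟨hvt.1, hvt.2.trans_lt ht.2⟩]

/-- For type `(ν₁,ν₂) = (1-ρ,0)`, the 2nd level derivative is the Caputo derivative. -/
theorem stmt_10 (ρ : ℝ) (hρ0 : 0 < ρ) (hρ1 : ρ < 1) (f : ℝ → ℝ) (hf : AC01 f)
    (hAC1 : AC01 (J (2 - ρ - (1 - ρ) - 0) f))
    (hAC2 : AC01 (J 0 (deriv (J (2 - ρ - (1 - ρ) - 0) f)))) :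
    ∀ᵐ t ∂(volume.restrict (Set.Icc (0:ℝ) 1)),
      LFD2 ρ (1 - ρ) 0 f t = RLD ρ (fun s => f s - f 0) t ∧
      LFD2 ρ (1 - ρ) 0 f t = CD ρ f t := by
  obtain ⟨g, hg, hfg⟩ := hf
  have ha : 0 < 1 - ρ := by linarith
  have hg' : IntervalIntegrable g volume 0 1 := by
    rw [intervalIntegrable_iff_integrableOn_Icc_of_le zero_le_one]
    exact hg
  have hfc : ContinuousOn f (Icc 0 1) := by
    have h1 : ContinuousOn (fun t => f 0 + ∫ τ in (0:ℝ)..t, g τ) (Icc 0 1) := by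
      apply ContinuousOn.add continuousOn_const
      have := intervalIntegral.continuousOn_primitive_interval (a := 0) (b := 1) (f := g)
        (μ := volume) (by rwa [uIcc_of_le zero_le_one])
      rwa [uIcc_of_le zero_le_one] at this
    exact h1.congr hfg
  -- the first derivative recovers `f` on the open interval
  have hd1 : ∀ t ∈ Ioo (0:ℝ) 1, deriv (J 1 f) t = f t := by
    intro t ht
    have hJ : J 1 f = fun t => ∫ τ in (0:ℝ)..t, f τ := by
      funext t
      simp [J]
    rw [hJ]
    apply HasDerivAt.deriv
    have hcat : ContinuousOn f (Ioo 0 1) := hfc.mono Ioo_subset_Icc_self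
    apply intervalIntegral.integral_hasDerivAt_right
    · apply ContinuousOn.intervalIntegrable
      rw [uIcc_of_le ht.1.le]
      exact hfc.mono (Icc_subset_Icc_right ht.2.le)
    · exact hcat.stronglyMeasurableAtFilter isOpen_Ioo t ht
    · exact hcat.continuousAt (Ioo_mem_nhds ht.1 ht.2)
  have hd2 : ∀ t ∈ Ioo (0:ℝ) 1, deriv (deriv (J 1 f)) t = deriv f t := by
    intro t ht
    apply Filter.EventuallyEq.deriv_eq
    filter_upwards [Ioo_mem_nhds ht.1 ht.2] with s hs using hd1 s hs
  have hdf : ∀ᵐ t, t ∈ Ioo (0:ℝ) 1 → deriv f t = g t := by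
    filter_upwards [hg'.ae_hasDerivAt_integral] with t ht htI
    rw [uIcc_of_le zero_le_one] at ht
    have := (ht ⟨htI.1.le, htI.2.le⟩ 0 ⟨le_rfl, zero_le_one⟩).const_add (f 0)
    rw [← this.deriv]
    apply Filter.EventuallyEq.deriv_eq
    filter_upwards [Ioo_mem_nhds htI.1 htI.2] with s hs using hfg s ⟨hs.1.le, hs.2.le⟩
  have hL : LFD2 ρ (1 - ρ) 0 f = J (1 - ρ) (deriv (deriv (J 1 f))) := by
    have : 2 - ρ - (1 - ρ) - 0 = (1:ℝ) := by ring
    unfold LFD2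
    rw [this]
    simp [J]
  rw [← restrict_Ioo_eq_restrict_Icc, ae_restrict_iff' measurableSet_Ioo]
  filter_upwards [aux_main (1 - ρ) ha f g hg hfg] with t ht htI
  have hC : LFD2 ρ (1 - ρ) 0 f t = CD ρ f t := by
    rw [hL]
    exact aux_J_congr (1 - ρ) ha _ _ (Eventually.of_forall hd2) t htI
  refine ⟨?_, hC⟩
  rw [hC]
  unfold RLD CD
  rw [ht htI]
  exact aux_J_congr (1 - ρ) ha _ _ hdf t htI
end
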